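/- arXiv:1908.08627 — 3 statements merged into one kernel-verified Lean document; each statement's English description precedes it below -/
import Mathlib

section
/- Let G be a paratopological group. Then G is simply sm-factorizable if and only if for each continuous function f : G → ℝ one can find a regular strongly submetrizable paratopological group H, a continuous surjective homomorphism π : G → H, and a continuous function g : H → ℝ such that f = g ∘ π. -/
open Topology TopologicalSpace Pointwise Function Set

def IsCozero {X : Type*} [TopologicalSpace X] (U : Set X) : Prop :=
  ∃ f : X → ℝ, Continuous f ∧ U = f ⁻¹' {x : ℝ | x ≠ 0}

/-- A paratopological group is simply sm-factorizable if every cozero set is saturated with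
respect to some continuous surjective homomorphism onto a separable metrizable paratopological group. -/
def SimplySMFactorizablePara (G : Type*) [Group G] [TopologicalSpace G] : Prop :=
  ∀ U : Set G, IsCozero U →
    ∃ (H : Type) (gH : Group H) (tH : TopologicalSpace H),
      letI := gH
      letI := tH
      ContinuousMul H ∧ SeparableSpace H ∧ MetrizableSpace H ∧
        ∃ π : G →* H, Continuous π ∧ Surjective π ∧ ⇑π ⁻¹' (⇑π '' U) = U

/-- A paratopological group is strongly submetrizable if it admits a continuous bijective
homomorphism onto a separable metrizable paratopological group. -/
def StronglySubmetrizablePara (H : Type*) [Group H] [TopologicalSpace H] : Prop :=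
  ∃ (K : Type) (gK : Group K) (tK : TopologicalSpace K),
    letI := gK
    letI := tK
    ContinuousMul K ∧ SeparableSpace K ∧ MetrizableSpace K ∧
      ∃ i : H →* K, Continuous i ∧ Bijective i

/-! A continuous function `f` on `G` is determined by the sets `{f < q}`, `q` rational. Each is a
cozero set, hence saturated with respect to a homomorphism onto a separable metrizable group. The
image `K` of `G` in the product of these countably many groups is separable metrizable, and `f` is
constant on the fibres of `G → K`, but the function it induces on `K` need not be continuous. It
becomes continuous for the quotient topology, which however need not be regular. Semiregularization
repairs this: for a paratopological group it gives a regular topology, still makes multiplication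
continuous, and keeps every continuous map to a regular space continuous, in particular the function
induced by `f` and the identity onto `K` with its metrizable topology.

Conversely, if `f = g ∘ π` and `i` is a continuous bijective homomorphism from the range of `π`
onto a separable metrizable group, then `{f ≠ 0}` is saturated with respect to `i ∘ π`. -/

universe v

theorem closure_mul_closure_subset {M : Type*} [Mul M] [TopologicalSpace M] [ContinuousMul M]
    (s t : Set M) : closure s * closure t ⊆ closure (s * t) :=
  mul_subset_iff.2 fun _ hx _ hy ↦
    map_mem_closure₂ continuous_mul hx hy fun _ ha _ hb ↦ mul_mem_mul ha hb

section ClosureMul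

variable {G : Type*} [Group G] [TopologicalSpace G] [ContinuousMul G]

theorem closure_subset_interior_closure_mul (s : Set G) {V : Set G} (hV : V ∈ 𝓝 1) :
    closure s ⊆ interior (closure (s * V)) := by
  have hV_one : (1 : G) ∈ interior V := mem_interior_iff_mem_nhds.2 hV
  refine (subset_mul_left _ hV_one).trans (interior_maximal ?_ isOpen_interior.mul_left)
  calc closure s * interior V
      ⊆ closure s * closure V := mul_subset_mul_left (interior_subset.trans subset_closure)
    _ ⊆ closure (s * V) := closure_mul_closure_subset s V

theorem exists_nhds_closure_mul_closure_subset {x y : G} {W : Set G} (hW : W ∈ 𝓝 (x * y)) :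
    ∃ A ∈ 𝓝 x, ∃ B ∈ 𝓝 y, closure A * closure B ⊆ interior (closure W) := by
  obtain ⟨P, hP, V, hV, hPV⟩ := Filter.mem_mul.1 (le_nhds_mul (x * y) 1 (by rwa [mul_one]))
  obtain ⟨A, hA, B, hB, hAB⟩ := Filter.mem_mul.1 (le_nhds_mul x y hP)
  refine ⟨A, hA, B, hB, ?_⟩
  calc closure A * closure B ⊆ closure (A * B) := closure_mul_closure_subset A B
    _ ⊆ interior (closure (A * B * V)) := closure_subset_interior_closure_mul _ hV
    _ ⊆ interior (closure W) :=
      interior_mono (closure_mono ((mul_subset_mul_right hAB).trans hPV))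

end ClosureMul

/-- A regular open set, the building block of the semiregularization: it is the interior of its
closure. -/
def IsRegularOpen {X : Type*} [TopologicalSpace X] (s : Set X) : Prop :=
  interior (closure s) = s

section IsRegularOpen

variable {X : Type*} [TopologicalSpace X] {s t : Set X}

theorem IsRegularOpen.isOpen (hs : IsRegularOpen s) : IsOpen s :=
  hs ▸ isOpen_interior

theorem isRegularOpen_univ : IsRegularOpen (univ : Set X) := by
  simp [IsRegularOpen]

theorem isRegularOpen_interior_closure (s : Set X) : IsRegularOpen (interior (closure s)) :=
  interior_closure_idem

theorem isRegularOpen_compl_closure (hs : IsOpen s) : IsRegularOpen (closure s)ᶜ := by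
  rw [IsRegularOpen, closure_compl, interior_compl, compl_inj_iff]
  nth_rw 1 [← hs.interior_eq]
  rw [closure_interior_idem, hs.interior_eq]

theorem IsRegularOpen.inter (hs : IsRegularOpen s) (ht : IsRegularOpen t) :
    IsRegularOpen (s ∩ t) := by
  refine Subset.antisymm ?_ (hs.isOpen.inter ht.isOpen).subset_interior_closure
  calc interior (closure (s ∩ t))
      ⊆ interior (closure s ∩ closure t) := interior_mono (closure_inter_subset_inter_closure s t)
    _ = s ∩ t := by rw [interior_inter, hs, ht]

end IsRegularOpen

/-- The semiregularization of a topological space: the same set with the topology whose base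
consists of the regular open sets. It is a type synonym so that both topologies are available as
instances. -/
def Semiregularization (X : Type*) : Type _ := X

namespace Semiregularization

/-- The identity of `X`, as a bijection onto its semiregularization. -/
def of {X : Type*} : X ≃ Semiregularization X := Equiv.refl X

section Topology

variable {X Y : Type*} [TopologicalSpace X]

instance : TopologicalSpace (Semiregularization X) :=
  generateFrom {s | IsRegularOpen (of ⁻¹' s)}

theorem isClosed_closure_of_isOpen {U : Set X} (hU : IsOpen U) :
    IsClosed (of.symm ⁻¹' closure U : Set (Semiregularization X)) :=
  ⟨isOpen_generateFrom_of_mem (isRegularOpen_compl_closure hU)⟩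

theorem continuous_of : Continuous (of : X → Semiregularization X) :=
  continuous_generateFrom_iff.2 fun _ hs ↦ hs.isOpen

theorem isTopologicalBasis_isRegularOpen :
    IsTopologicalBasis {s : Set (Semiregularization X) | IsRegularOpen (of ⁻¹' s)} :=
  isTopologicalBasis_of_subbasis_of_finiteInter rfl
    ⟨isRegularOpen_univ, fun _ hs _ ht ↦ hs.inter ht⟩

theorem hasBasis_nhds (x : X) :
    (𝓝 (of x)).HasBasis (· ∈ 𝓝 x) fun W ↦ of.symm ⁻¹' interior (closure W) := by
  refine isTopologicalBasis_isRegularOpen.nhds_hasBasis.to_hasBasis ?_ fun W hW ↦ ?_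
  · rintro s ⟨hs, hxs⟩
    exact ⟨of ⁻¹' s, hs.isOpen.mem_nhds hxs, hs.subset⟩
  · have hxW : x ∈ interior (closure W) :=
      interior_mono subset_closure (mem_interior_iff_mem_nhds.2 hW)
    exact ⟨of.symm ⁻¹' interior (closure W), ⟨isRegularOpen_interior_closure W, hxW⟩, Subset.rfl⟩

theorem continuous_of_comp_of [TopologicalSpace Y] [RegularSpace Y] {f : Semiregularization X → Y}
    (hf : Continuous (f ∘ of)) : Continuous f := by
  refine continuous_iff_continuousAt.2 (of.surjective.forall.2 fun x ↦ ?_)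
  refine ((hasBasis_nhds x).tendsto_iff (closed_nhds_basis (f (of x)))).2 ?_
  rintro C ⟨hC, hC_closed⟩
  refine ⟨(f ∘ of) ⁻¹' C, hf.continuousAt hC, fun y hy ↦ ?_⟩
  exact (hC_closed.preimage hf).closure_subset (interior_subset hy)

end Topology

section Group

variable {G : Type*} [Group G]

instance : Group (Semiregularization G) := inferInstanceAs (Group G)

/-- The identity of `G`, as a group isomorphism onto its semiregularization. -/
def ofMulEquiv : G ≃* Semiregularization G := MulEquiv.refl G

variable [TopologicalSpace G]

theorem continuous_ofMulEquiv : Continuous (ofMulEquiv : G → Semiregularization G) :=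
  continuous_of

variable [ContinuousMul G]

instance : RegularSpace (Semiregularization G) := by
  refine .of_exists_mem_nhds_isClosed_subset (of.surjective.forall.2 fun x s hs ↦ ?_)
  obtain ⟨W, hW, hWs⟩ := (hasBasis_nhds x).mem_iff.1 hs
  obtain ⟨A, hA, B, hB, hAB⟩ :=
    exists_nhds_closure_mul_closure_subset (x := x) (y := 1) (by rwa [mul_one])
  have closure_interior_subset : closure (interior A) ⊆ interior (closure W) :=
    calc closure (interior A) ⊆ closure A := closure_mono interior_subset
      _ ⊆ closure A * closure B := subset_mul_left _ (subset_closure (mem_of_mem_nhds hB))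
      _ ⊆ interior (closure W) := hAB
  have closure_mem_nhds : of.symm ⁻¹' closure (interior A) ∈ 𝓝 (of x) :=
    (hasBasis_nhds x).mem_iff.2
      ⟨interior A, interior_mem_nhds.2 hA, preimage_mono interior_subset⟩
  exact ⟨_, closure_mem_nhds, isClosed_closure_of_isOpen isOpen_interior,
    (preimage_mono closure_interior_subset).trans hWs⟩

instance : ContinuousMul (Semiregularization G) where
  continuous_mul := by
    refine continuous_iff_continuousAt.2 fun p ↦ ?_
    obtain ⟨⟨x, y⟩, rfl⟩ := (of.surjective.prodMap of.surjective) p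
    refine (((hasBasis_nhds x).prod_nhds (hasBasis_nhds y)).tendsto_iff
      (hasBasis_nhds (x * y))).2 fun W hW ↦ ?_
    obtain ⟨A, hA, B, hB, hAB⟩ := exists_nhds_closure_mul_closure_subset hW
    refine ⟨(A, B), ⟨hA, hB⟩, ?_⟩
    rintro ⟨a, b⟩ ⟨ha, hb⟩
    exact hAB (mul_mem_mul (interior_subset ha) (interior_subset hb))

end Group

end Semiregularization

theorem continuousMul_of_isQuotientMap {G H : Type*} [Group G] [TopologicalSpace G]
    [ContinuousMul G] [Group H] [TopologicalSpace H] {φ : G →* H} (hφ : IsQuotientMap φ) :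
    ContinuousMul H := by
  have isOpenQuotientMap : IsOpenQuotientMap φ := MonoidHom.isOpenQuotientMap_of_isQuotientMap hφ
  refine ⟨(isOpenQuotientMap.prodMap isOpenQuotientMap).continuous_comp_iff.1 ?_⟩
  have mul_comp_prodMap :
      (fun p : H × H ↦ p.1 * p.2) ∘ Prod.map φ φ = φ ∘ fun p : G × G ↦ p.1 * p.2 :=
    funext fun p ↦ (map_mul φ p.1 p.2).symm
  rw [mul_comp_prodMap]
  exact hφ.continuous.comp continuous_mul

/-- The group `Q` is `K` with the coinduced topology rather than `G ⧸ φ.ker`, which would live in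
the universe of `G`. -/
theorem exists_isQuotientMap_comp_bijective {G : Type*} {K : Type v} [Group G]
    [tG : TopologicalSpace G] [Group K] [TopologicalSpace K] {φ : G →* K} (hφ : Continuous φ)
    (hφ_surj : Surjective φ) :
    ∃ (Q : Type v) (_ : Group Q) (_ : TopologicalSpace Q) (q : G →* Q) (i : Q →* K),
      IsQuotientMap q ∧ Continuous i ∧ Bijective i ∧ i.comp q = φ :=
  ⟨K, inferInstance, tG.coinduced φ, φ, MonoidHom.id K, letI := tG.coinduced φ; ⟨⟨rfl⟩, hφ_surj⟩,
    continuous_coinduced_dom.2 hφ, bijective_id, MonoidHom.id_comp φ⟩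

theorem exists_regular_stronglySubmetrizable_factorization {G Y : Type*} {K : Type} [Group G]
    [TopologicalSpace G] [ContinuousMul G] [TopologicalSpace Y] [RegularSpace Y] [Group K]
    [TopologicalSpace K] [ContinuousMul K] [SeparableSpace K] [MetrizableSpace K] {φ : G →* K}
    (hφ : Continuous φ) (hφ_surj : Surjective φ) {f : G → Y} (hf : Continuous f)
    (hfφ : f.FactorsThrough φ) :
    ∃ (H : Type) (_ : Group H) (_ : TopologicalSpace H),
      ContinuousMul H ∧ T1Space H ∧ RegularSpace H ∧ StronglySubmetrizablePara H ∧
        ∃ π : G →* H, Continuous π ∧ Surjective π ∧ ∃ g : H → Y, Continuous g ∧ f = g ∘ π := by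
  obtain ⟨Q, _, _, q, i, hq, hi, hi_bij, rfl⟩ := exists_isQuotientMap_comp_bijective hφ hφ_surj
  have : ContinuousMul Q := continuousMul_of_isQuotientMap hq
  let e : Q ≃* Semiregularization Q := Semiregularization.ofMulEquiv
  have he : Continuous e := Semiregularization.continuous_ofMulEquiv
  let j : Semiregularization Q →* K := i.comp e.symm.toMonoidHom
  have hj : Continuous j := Semiregularization.continuous_of_comp_of hi
  have hj_bij : Bijective j := hi_bij.comp e.symm.bijective
  have hfq : f.FactorsThrough q := fun _ _ hxy ↦ hfφ (congrArg i hxy)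
  let F : C(G, Y) := ⟨f, hf⟩
  let g : C(Q, Y) := IsQuotientMap.lift (f := ⟨q, hq.continuous⟩) hq F hfq
  refine ⟨Semiregularization Q, inferInstance, inferInstance, inferInstance,
    t1Space_of_injective_of_continuous hj_bij.injective hj, inferInstance,
    ⟨K, inferInstance, inferInstance, inferInstance, inferInstance, inferInstance, j, hj, hj_bij⟩,
    e.toMonoidHom.comp q, he.comp hq.continuous, e.surjective.comp hq.surjective, g ∘ e.symm,
    Semiregularization.continuous_of_comp_of g.continuous, ?_⟩
  exact congrArg DFunLike.coe (IsQuotientMap.lift_comp (f := ⟨q, hq.continuous⟩) hq F hfq).symm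

theorem isCozero_setOf_lt {X : Type*} [TopologicalSpace X] {f g : X → ℝ} (hf : Continuous f)
    (hg : Continuous g) : IsCozero {x | f x < g x} :=
  ⟨fun x ↦ max (g x - f x) 0, by fun_prop, by ext x; simp⟩

theorem factorsThrough_pi_of_saturated_sublevels {X α ι : Type*} {Y : ι → Type*} [LinearOrder α]
    [TopologicalSpace α] [OrderTopology α] [DenselyOrdered α] {d : ι → α} (hd : DenseRange d)
    {f : X → α} {p : ∀ i, X → Y i}
    (hp : ∀ i, p i ⁻¹' (p i '' {x | f x < d i}) = {x | f x < d i}) :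
    f.FactorsThrough fun x i ↦ p i x := by
  have le_of_pi_eq {x y : X} (hxy : ∀ i, p i x = p i y) : f x ≤ f y := by
    by_contra! hlt
    obtain ⟨_, ⟨i, rfl⟩, hyi, hix⟩ := hd.exists_between hlt
    have hx : x ∈ {x | f x < d i} := hp i ▸ ⟨y, hyi, (hxy i).symm⟩
    exact hix.not_gt hx
  exact fun x y hxy ↦ (le_of_pi_eq (congrFun hxy)).antisymm (le_of_pi_eq (congrFun hxy.symm))

theorem secondCountableTopology_of_separable_pseudoMetrizable (X : Type*) [TopologicalSpace X]
    [SeparableSpace X] [PseudoMetrizableSpace X] : SecondCountableTopology X :=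
  letI := pseudoMetrizableSpacePseudoMetric X
  UniformSpace.secondCountable_of_separable X

theorem SimplySMFactorizablePara.exists_factorsThrough {G : Type*} [Group G] [TopologicalSpace G]
    (hG : SimplySMFactorizablePara G) {f : G → ℝ} (hf : Continuous f) :
    ∃ (K : Type) (_ : Group K) (_ : TopologicalSpace K),
      ContinuousMul K ∧ SeparableSpace K ∧ MetrizableSpace K ∧
        ∃ φ : G →* K, Continuous φ ∧ Surjective φ ∧ f.FactorsThrough φ := by
  choose H _ _ hH_mul hH_sep hH_metr π hπ _ hπ_saturated using
    fun q : ℚ ↦ hG _ (isCozero_setOf_lt hf (continuous_const (y := (q : ℝ))))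
  have (q : ℚ) : ContinuousMul (H q) := hH_mul q
  have (q : ℚ) : SecondCountableTopology (H q) :=
    secondCountableTopology_of_separable_pseudoMetrizable (H q)
  let Φ : G →* ∀ q, H q := MonoidHom.pi π
  have hfΦ : f.FactorsThrough Φ :=
    factorsThrough_pi_of_saturated_sublevels Rat.denseRange_cast hπ_saturated
  have : SecondCountableTopology Φ.range := IsInducing.subtypeVal.secondCountableTopology
  refine ⟨Φ.range, inferInstance, inferInstance, Φ.range.toSubmonoid.continuousMul, inferInstance,
    IsEmbedding.subtypeVal.metrizableSpace, Φ.rangeRestrict, (continuous_pi hπ).subtype_mk _,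
    Φ.rangeRestrict_surjective, ?_⟩
  exact fun x y hxy ↦ hfΦ (congrArg Subtype.val hxy)

/-- A paratopological group is simply sm-factorizable iff every continuous real-valued function
factors through a continuous surjective homomorphism onto a regular strongly submetrizable
paratopological group. -/
theorem statement1 (G : Type*) [Group G] [TopologicalSpace G] [ContinuousMul G] :
    SimplySMFactorizablePara G ↔
      ∀ f : G → ℝ, Continuous f →
        ∃ (H : Type) (gH : Group H) (tH : TopologicalSpace H),
          letI := gH
          letI := tH
          ContinuousMul H ∧ T1Space H ∧ RegularSpace H ∧ StronglySubmetrizablePara H ∧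
            ∃ π : G →* H, Continuous π ∧ Surjective π ∧
              ∃ g : H → ℝ, Continuous g ∧ f = g ∘ π := by
  constructor
  · intro hG f hf
    obtain ⟨K, _, _, _, _, _, φ, hφ, hφ_surj, hfφ⟩ := hG.exists_factorsThrough hf
    exact exists_regular_stronglySubmetrizable_factorization hφ hφ_surj hf hfφ
  · rintro h U ⟨f, hf, rfl⟩
    obtain ⟨H, _, _, -, -, -, ⟨K, gK, tK, hK_mul, hK_sep, hK_metr, i, hi, hi_bij⟩,
      π, hπ, hπ_surj, g, -, rfl⟩ := h f hf
    refine ⟨K, gK, tK, hK_mul, hK_sep, hK_metr, i.comp π, hi.comp hπ,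
      hi_bij.surjective.comp hπ_surj, ?_⟩
    rw [MonoidHom.coe_comp, image_comp, preimage_comp, preimage_image_eq _ hi_bij.injective,
      preimage_comp, preimage_image_preimage]
end

section
/- Every totally ω-narrow weakly Lindelöf paratopological group G is simply sm-factorizable. -/
open Topology TopologicalSpace Pointwise Function Set

/-- A space is weakly Lindelöf if every open cover has a countable subfamily with dense union. -/
def WeaklyLindelof (X : Type*) [TopologicalSpace X] : Prop :=
  ∀ 𝒰 : Set (Set X), (∀ U ∈ 𝒰, IsOpen U) → ⋃₀ 𝒰 = Set.univ →
    ∃ 𝒱 ⊆ 𝒰, 𝒱.Countable ∧ Dense (⋃₀ 𝒱)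

/-- A (para)topological group is ω-narrow if each neighborhood of the identity translates
over a countable set to cover the group. -/
def OmegaNarrow (G : Type*) [Group G] [TopologicalSpace G] : Prop :=
  ∀ U ∈ 𝓝 (1 : G), ∃ A : Set G, A.Countable ∧ A * U = Set.univ ∧ U * A = Set.univ

/-- The conjugate topology τ⁻¹ = {U⁻¹ : U ∈ τ}: the topology induced by the inversion map. -/
def conjTop (G : Type*) [Group G] (τ : TopologicalSpace G) : TopologicalSpace G :=
  TopologicalSpace.induced (fun x : G => x⁻¹) τ

/-!
Let `f : G → ℝ` be continuous. Weak Lindelöfness, applied to translates of neighbourhoods of `1` on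
which `f` oscillates little, yields countably many neighbourhoods of `1` that control `f` near a
dense set of points, and total ω-narrowness enlarges them to a countable base at `1` of a coarser
paratopological group topology `σ`. The function `f` need not be `σ`-continuous, but for every `ε`
the points near which, in the sense of `σ`, it is within `ε` of its value are dense in `G`. This
survives the passage from `σ` to its regularization, which is regular and second countable and
therefore has a separable metrizable Kolmogorov quotient. If `x` and `y` are identified in that
quotient, so are `g` and `g * (x⁻¹ * y)` for every `g`. Hence `f (g * (x⁻¹ * y))` is within `ε` of
`f g` for a dense set of `g`, so for all `g` by continuity, and `g = x` gives `f x = f y`.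
-/

section

open Filter

section CountableClosure

variable {α : Type*} {s C : Set α} {S : α → Set α}

theorem exists_countable_superset_forall_subset (hSc : ∀ a ∈ s, (S a).Countable)
    (hSs : ∀ a ∈ s, S a ⊆ s) (hC : C.Countable) (hCs : C ⊆ s) :
    ∃ D, C ⊆ D ∧ D ⊆ s ∧ D.Countable ∧ ∀ a ∈ D, S a ⊆ D := by
  let Φ : Set α → Set α := fun E ↦ ⋃ a ∈ E, S a
  have hΦ : ∀ n, Φ^[n] C ⊆ s ∧ (Φ^[n] C).Countable := by
    intro n
    induction n with
    | zero => exact ⟨hCs, hC⟩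
    | succ n ih =>
      rw [iterate_succ_apply']
      exact ⟨iUnion₂_subset fun a ha ↦ hSs a (ih.1 ha),
        ih.2.biUnion fun a ha ↦ hSc a (ih.1 ha)⟩
  refine ⟨⋃ n, Φ^[n] C, subset_iUnion (Φ^[·] C) 0, iUnion_subset fun n ↦ (hΦ n).1,
    countable_iUnion fun n ↦ (hΦ n).2, fun a ha ↦ ?_⟩
  obtain ⟨n, hn⟩ := mem_iUnion.1 ha
  refine Subset.trans ?_ (subset_iUnion (Φ^[·] C) (n + 1))
  rw [iterate_succ_apply']
  exact subset_biUnion_of_mem hn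

end CountableClosure

section TranslationTopology

variable {G : Type*} [Group G] {F : Filter G}

theorem map_mul_left_nhds_one_of_separatelyContinuousMul [TopologicalSpace G]
    [SeparatelyContinuousMul G] (x : G) : (𝓝 1).map (x * ·) = 𝓝 x := by
  simpa only [Homeomorph.coe_mulLeft, mul_one] using (Homeomorph.mulLeft x).map_nhds_eq 1

/-- The conditions on a filter `F` on a group under which it is the filter of neighbourhoods of `1`
for some paratopological group topology. -/
structure IsNhdsOneFilter (F : Filter G) : Prop where
  pure_le : pure 1 ≤ F
  mul_le : F * F ≤ F
  tendsto_conj : ∀ x, Tendsto (MulAut.conj x) F F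

/-- The left-invariant topology in which the neighbourhoods of `x` are the left translates by `x` of
the members of `F`; this description of the neighbourhoods is valid for `IsNhdsOneFilter F`. -/
@[reducible] def translationTopology (F : Filter G) : TopologicalSpace G :=
  .mkOfNhds fun x ↦ F.map (x * ·)

theorem isNhdsOneFilter_nhds_one [TopologicalSpace G] [ContinuousMul G] :
    IsNhdsOneFilter (𝓝 (1 : G)) where
  pure_le := pure_le_nhds 1
  mul_le := (nhds_mul_nhds_one 1).le
  tendsto_conj x := by
    have hconj : Continuous (MulAut.conj x) := IsTopologicalGroup.continuous_conj x
    simpa only [map_one] using hconj.tendsto 1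

theorem isNhdsOneFilter_generate {D : Set (Set G)} (hone : ∀ V ∈ D, 1 ∈ V)
    (hmul : ∀ V ∈ D, ∃ W ∈ D, W * W ⊆ V)
    (hconj : ∀ V ∈ D, ∀ x, ∃ W ∈ D, MapsTo (MulAut.conj x) W V) :
    IsNhdsOneFilter (generate D) where
  pure_le := le_generate_iff.2 hone
  mul_le := le_generate_iff.2 fun V hV ↦
    let ⟨_, hW, hWV⟩ := hmul V hV
    mem_of_superset (mul_mem_mul (mem_generate_of_mem hW) (mem_generate_of_mem hW)) hWV
  tendsto_conj x := le_generate_iff.2 fun V hV ↦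
    let ⟨_, hW, hWV⟩ := hconj V hV x
    mem_map.2 (mem_of_superset (mem_generate_of_mem hW) hWV)

namespace IsNhdsOneFilter

theorem nhds_translationTopology (hF : IsNhdsOneFilter F) (x : G) :
    @nhds G (translationTopology F) x = F.map (x * ·) := by
  refine nhds_mkOfNhds _ x (fun a ↦ ?_) fun a s hs ↦ ?_
  · simpa only [map_pure, mul_one] using map_mono (m := (a * ·)) hF.pure_le
  · obtain ⟨V, hV, W, hW, hVW⟩ := mem_mul.1 (hF.mul_le hs)
    refine eventually_map.2 (mem_of_superset hV fun v hv ↦ mem_of_superset hW fun w hw ↦ ?_)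
    simpa only [mem_preimage, mul_assoc] using hVW (mul_mem_mul hv hw)

theorem nhds_one_translationTopology (hF : IsNhdsOneFilter F) :
    @nhds G (translationTopology F) 1 = F := by
  simp only [hF.nhds_translationTopology, one_mul, map_id']

theorem map_conj (hF : IsNhdsOneFilter F) (x : G) : F.map (MulAut.conj x) = F := by
  refine le_antisymm (hF.tendsto_conj x) ?_
  calc F = (F.map (MulAut.conj x⁻¹)).map (MulAut.conj x) := by
        simp [Filter.map_map, Function.comp_def, mul_assoc]
    _ ≤ F.map (MulAut.conj x) := map_mono (hF.tendsto_conj x⁻¹)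

theorem continuousMul_translationTopology (hF : IsNhdsOneFilter F) :
    @ContinuousMul G (translationTopology F) _ := by
  let _ := translationTopology F
  refine ContinuousMul.of_nhds_one ?_ (fun x ↦ ?_) fun x ↦ ?_ <;>
    rw [hF.nhds_one_translationTopology]
  · rw [Tendsto, map_uncurry_prod]
    exact hF.mul_le
  · exact hF.nhds_translationTopology x
  · calc 𝓝 x = F.map (x * ·) := hF.nhds_translationTopology x
      _ = (F.map (MulAut.conj x)).map (· * x) := by simp [Filter.map_map, Function.comp_def]
      _ = F.map (· * x) := by rw [hF.map_conj]

theorem le_translationTopology [τ : TopologicalSpace G] [SeparatelyContinuousMul G]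
    (hF : IsNhdsOneFilter F) (hle : 𝓝 1 ≤ F) : τ ≤ translationTopology F := by
  refine (le_iff_nhds _ _).2 fun x ↦ ?_
  rw [hF.nhds_translationTopology, ← map_mul_left_nhds_one_of_separatelyContinuousMul]
  exact map_mono hle

end IsNhdsOneFilter

end TranslationTopology

section Regularization

variable {G : Type*} [Group G] [σ : TopologicalSpace G] [ContinuousMul G]

theorem isNhdsOneFilter_lift'_closure : IsNhdsOneFilter ((𝓝 (1 : G)).lift' closure) where
  pure_le := isNhdsOneFilter_nhds_one.pure_le.trans (le_lift'_closure _)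
  mul_le := ((𝓝 1).basis_sets.lift'_closure).ge_iff.2 fun V hV ↦ by
    obtain ⟨W, hW, hWV⟩ := exists_nhds_one_split hV
    exact mem_of_superset (mul_mem_mul (mem_lift' hW) (mem_lift' hW)) <|
      (smul_set_closure_subset W W).trans (closure_mono (mul_subset_iff.2 hWV))
  tendsto_conj x :=
    (isNhdsOneFilter_nhds_one.tendsto_conj x).lift'_closure (IsTopologicalGroup.continuous_conj x)

/-- The regularization of a paratopological group topology: the closures of the neighbourhoods of a
point form a base of its neighbourhoods in the new topology. -/
@[reducible] def regularization (σ : TopologicalSpace G) : TopologicalSpace G :=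
  translationTopology ((@nhds G σ 1).lift' (@closure G σ))

theorem continuousMul_regularization : @ContinuousMul G (regularization σ) _ :=
  isNhdsOneFilter_lift'_closure.continuousMul_translationTopology

theorem le_regularization : σ ≤ regularization σ :=
  isNhdsOneFilter_lift'_closure.le_translationTopology (le_lift'_closure _)

theorem nhds_regularization (x : G) : @nhds G (regularization σ) x = (𝓝 x).lift' closure := by
  rw [isNhdsOneFilter_lift'_closure.nhds_translationTopology,
    ← (isClosedMap_mul_left x).lift'_closure_map_eq (continuous_const_mul x),
    map_mul_left_nhds_one_of_separatelyContinuousMul]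

theorem firstCountableTopology_regularization [FirstCountableTopology G] :
    @FirstCountableTopology G (regularization σ) := by
  refine @FirstCountableTopology.mk G (regularization σ) fun x ↦ ?_
  obtain ⟨U, hU⟩ := (𝓝 x).exists_antitone_basis
  rw [nhds_regularization]
  exact hU.1.lift'_closure.isCountablyGenerated

theorem eventually_regularization_mem_nhds {C : Set G} {x : G} (hC : IsClosed C) (hCx : C ∈ 𝓝 x) :
    ∀ᶠ y in @nhds G (regularization σ) x, C ∈ 𝓝 y := by
  rw [nhds_regularization]
  rw [← nhds_mul_nhds_one] at hCx
  obtain ⟨A, hA, B, hB, hAB⟩ := mem_mul.1 hCx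
  refine mem_of_superset (mem_lift' hA) fun y hy ↦
    mem_of_superset (smul_mem_nhds_self.2 hB) (smul_set_subset_iff.2 fun b hb ↦ ?_)
  have hyb : y * b ∈ closure C :=
    map_mem_closure (f := (· * b)) (continuous_mul_const b) hy fun a ha ↦ hAB (mul_mem_mul ha hb)
  rwa [hC.closure_eq] at hyb

theorem isOpen_regularization_interior {C : Set G} (hC : IsClosed C) :
    IsOpen[regularization σ] (interior C) := by
  refine (@isOpen_iff_mem_nhds G (regularization σ) _).2 fun x hx ↦ ?_
  exact (eventually_regularization_mem_nhds hC (mem_interior_iff_mem_nhds.1 hx)).mono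
    fun _ ↦ mem_interior_iff_mem_nhds.2

theorem regularSpace_regularization : @RegularSpace G (regularization σ) := by
  refine @RegularSpace.of_hasBasis G (regularization σ) _ _ _
    (fun x ↦ nhds_regularization x ▸ (nhds_basis_opens x).lift'_closure) fun x U hU ↦ ?_
  refine @isOpen_compl_iff _ _ (regularization σ) |>.1 ?_
  rw [← interior_compl]
  exact isOpen_regularization_interior hU.2.isClosed_compl

end Regularization

section MetrizableQuotient

/-- The group structure on the Kolmogorov quotient of a paratopological group. Mathlib's instance
requires inversion to be continuous. -/
@[reducible] noncomputable def separationQuotientGroup (G : Type*) [Group G] [TopologicalSpace G]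
    [ContinuousMul G] : Group (SeparationQuotient G) :=
  groupOfIsUnit <| SeparationQuotient.surjective_mk.forall.2 fun g ↦
    (Group.isUnit g).map (SeparationQuotient.mkMonoidHom (M := G))

theorem exists_small_mulEquiv_homeomorph (Q : Type*) [Group Q] [TopologicalSpace Q]
    [ContinuousMul Q] [T3Space Q] [SecondCountableTopology Q] :
    ∃ (H : Type) (_ : Group H) (_ : TopologicalSpace H),
      ContinuousMul H ∧ ∃ e : Q ≃* H, IsHomeomorph e := by
  obtain ⟨φ, hφ⟩ := exists_embedding_l_infty Q
  have : Small.{0} Q := small_of_injective hφ.injective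
  exact ⟨Shrink.{0} Q, inferInstance, inferInstance,
    (Shrink.homeomorph Q).symm.isInducing.continuousMul (Shrink.mulEquiv (α := Q)),
    Shrink.mulEquiv.symm, (Shrink.homeomorph Q).isHomeomorph⟩

theorem exists_isInducing_hom_separable_metrizable (G : Type*) [Group G] [TopologicalSpace G]
    [ContinuousMul G] [RegularSpace G] [SecondCountableTopology G] :
    ∃ (H : Type) (_ : Group H) (_ : TopologicalSpace H),
      ContinuousMul H ∧ SeparableSpace H ∧ MetrizableSpace H ∧
        ∃ π : G →* H, IsInducing π ∧ Surjective π := by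
  let Q := SeparationQuotient G
  let _ : Group Q := separationQuotientGroup G
  have : SecondCountableTopology Q :=
    SeparationQuotient.isQuotientMap_mk.secondCountableTopology SeparationQuotient.isOpenMap_mk
  have : ContinuousMul Q := SeparationQuotient.instContinuousMul
  obtain ⟨H, _, _, hmul, e, he⟩ := exists_small_mulEquiv_homeomorph Q
  have : SecondCountableTopology H := he.homeomorph.symm.secondCountableTopology
  have : T3Space H := he.homeomorph.t3Space
  exact ⟨H, _, _, hmul, inferInstance, metrizableSpace_of_t3_secondCountable H,
    e.toMonoidHom.comp SeparationQuotient.mkMonoidHom,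
    he.isInducing.comp SeparationQuotient.isInducing_mk,
    e.surjective.comp SeparationQuotient.surjective_mk⟩

end MetrizableQuotient

section TotallyOmegaNarrow

variable {G : Type*} [Group G]

/-- A paratopological group is totally ω-narrow if its associated topological group, obtained by
joining the topology with its conjugate, is ω-narrow. -/
def TotallyOmegaNarrow (G : Type*) [Group G] [τ : TopologicalSpace G] : Prop :=
  @OmegaNarrow G _ (τ ⊓ conjTop G τ)

namespace TotallyOmegaNarrow

theorem mono {τ σ : TopologicalSpace G} (hle : τ ≤ σ) (h : @TotallyOmegaNarrow G _ τ) :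
    @TotallyOmegaNarrow G _ σ :=
  fun U hU ↦ h U (nhds_mono (inf_le_inf hle (induced_mono hle)) hU)

variable [τ : TopologicalSpace G]

theorem exists_countable_mul_eq_univ (h : TotallyOmegaNarrow G) {V : Set G} (hV : V ∈ 𝓝 1) :
    ∃ A : Set G, A.Countable ∧ A * (V ∩ V⁻¹) = univ ∧ (V ∩ V⁻¹) * A = univ := by
  refine h _ ?_
  rw [nhds_inf, conjTop, nhds_induced, inv_one]
  exact inter_mem_inf hV (preimage_mem_comap hV)

variable [ContinuousMul G]

theorem exists_countable_mapsTo_conj (h : TotallyOmegaNarrow G) {V : Set G} (hV : V ∈ 𝓝 1) :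
    ∃ S : Set (Set G), S.Countable ∧ S ⊆ (𝓝 1).sets ∧
      ∀ x, ∃ W ∈ S, MapsTo (MulAut.conj x) W V := by
  obtain ⟨T, hT, hTV⟩ := exists_nhds_one_split4 hV
  obtain ⟨A, hA, -, hTA⟩ := h.exists_countable_mul_eq_univ hT
  refine ⟨(fun a ↦ MulAut.conj a ⁻¹' T) '' A, hA.image _, image_subset_iff.2 fun a _ ↦
    isNhdsOneFilter_nhds_one.tendsto_conj a hT, fun x ↦ ?_⟩
  obtain ⟨t, ⟨ht, htinv⟩, a, ha, rfl⟩ := mem_mul.1 (hTA ▸ mem_univ x)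
  refine ⟨_, mem_image_of_mem _ ha, fun w hw ↦ ?_⟩
  have hsplit : MulAut.conj (t * a) w = t * MulAut.conj a w * t⁻¹ * 1 := by simp [mul_assoc]
  exact hsplit ▸ hTV ht hw htinv (mem_of_mem_nhds hT)

theorem exists_coarser_firstCountableTopology (h : TotallyOmegaNarrow G) {C : Set (Set G)}
    (hC : C.Countable) (hCnhds : C ⊆ (𝓝 1).sets) :
    ∃ σ : TopologicalSpace G, τ ≤ σ ∧ @ContinuousMul G σ _ ∧ @FirstCountableTopology G σ ∧
      C ⊆ (@nhds G σ 1).sets := by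
  choose! W hW hWV using fun V (hV : V ∈ 𝓝 (1 : G)) ↦ exists_nhds_one_split hV
  choose! S hSc hSnhds hSV using fun V (hV : V ∈ 𝓝 (1 : G)) ↦ h.exists_countable_mapsTo_conj hV
  obtain ⟨D, hCD, hDnhds, hDc, hD⟩ := exists_countable_superset_forall_subset
    (S := fun V ↦ insert (W V) (S V)) (fun V hV ↦ (hSc V hV).insert _)
    (fun V hV ↦ insert_subset (hW V hV) (hSnhds V hV)) hC hCnhds
  have hF : IsNhdsOneFilter (generate D) := isNhdsOneFilter_generate
    (fun V hV ↦ mem_of_mem_nhds (hDnhds hV))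
    (fun V hV ↦ ⟨W V, hD V hV (mem_insert _ _), mul_subset_iff.2 (hWV V (hDnhds hV))⟩)
    (fun V hV x ↦
      let ⟨T, hT, hTV⟩ := hSV V (hDnhds hV) x
      ⟨T, hD V hV (mem_insert_of_mem _ hT), hTV⟩)
  refine ⟨translationTopology (generate D), hF.le_translationTopology (le_generate_iff.2 hDnhds),
    hF.continuousMul_translationTopology, ?_, ?_⟩
  · refine @FirstCountableTopology.mk G (translationTopology _) fun x ↦ ?_
    have : (generate D).IsCountablyGenerated := ⟨D, hDc, rfl⟩
    rw [hF.nhds_translationTopology]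
    infer_instance
  · rw [hF.nhds_one_translationTopology]
    exact fun V hV ↦ mem_generate_of_mem (hCD hV)

theorem secondCountableTopology [FirstCountableTopology G] (h : TotallyOmegaNarrow G) :
    SecondCountableTopology G := by
  obtain ⟨U, hU, hbasis⟩ := (nhds_basis_opens (1 : G)).exists_antitone_subbasis
  choose A hA hAU _ using fun n ↦ h.exists_countable_mul_eq_univ (hbasis.mem n)
  let B : Set (Set G) := ⋃ n, (· • U n) '' A n
  have hB : IsTopologicalBasis B := by
    refine isTopologicalBasis_of_isOpen_of_nhds ?_ fun x O hx hO ↦ ?_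
    · simp only [B, mem_iUnion]
      rintro _ ⟨n, a, -, rfl⟩
      exact (hU n).2.leftCoset a
    · have hOx : x⁻¹ • O ∈ 𝓝 1 := by
        simpa only [smul_eq_mul, inv_mul_cancel] using smul_mem_nhds_smul x⁻¹ (hO.mem_nhds hx)
      obtain ⟨n, -, hn⟩ := hbasis.toHasBasis.mul_self.mem_iff.1 hOx
      obtain ⟨a, ha, u, ⟨hu, huinv⟩, rfl⟩ := mem_mul.1 (hAU n ▸ mem_univ x)
      refine ⟨a • U n, mem_iUnion_of_mem n (mem_image_of_mem _ ha), smul_mem_smul_set hu,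
        smul_set_subset_iff.2 fun w hw ↦ ?_⟩
      simpa [mul_assoc] using mem_inv_smul_set_iff.1 (hn (Set.mul_mem_mul huinv hw))
  exact hB.secondCountableTopology (countable_iUnion fun n ↦ (hA n).image _)

end TotallyOmegaNarrow

end TotallyOmegaNarrow

section WeaklyLindelof

theorem WeaklyLindelof.exists_countable_dense_biUnion {X ι : Type*} [TopologicalSpace X]
    (hX : WeaklyLindelof X) {U : ι → Set X} (hU : ∀ i, IsOpen (U i)) (hcover : ⋃ i, U i = univ) :
    ∃ s : Set ι, s.Countable ∧ Dense (⋃ i ∈ s, U i) := by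
  obtain ⟨𝒱, h𝒱, h𝒱c, hdense⟩ := hX (range U) (forall_mem_range.2 hU) (sUnion_range U ▸ hcover)
  obtain ⟨s, rfl, hinj⟩ := exists_image_eq_injOn_of_subset_range h𝒱
  exact ⟨s, countable_of_injective_of_countable_image hinj h𝒱c, sUnion_image U s ▸ hdense⟩

theorem WeaklyLindelof.exists_countable_nhds_one_dense {G Y : Type*} [Group G]
    [TopologicalSpace G] [ContinuousMul G] [PseudoMetricSpace Y] {f : G → Y}
    (hG : WeaklyLindelof G) (hf : Continuous f) {ε : ℝ} (hε : 0 < ε) :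
    ∃ C : Set (Set G), C.Countable ∧ C ⊆ (𝓝 1).sets ∧
      Dense {x | ∃ V ∈ C, ∀ v ∈ V, dist (f (x * v)) (f x) < ε} := by
  have hV : ∀ x, ∃ V, IsOpen V ∧ 1 ∈ V ∧
      ∀ v ∈ V, ∀ w ∈ V, dist (f (x * (v * w))) (f x) < ε / 2 := by
    intro x
    have hcont : Continuous fun v ↦ dist (f (x * v)) (f x) := by fun_prop
    refine exists_open_nhds_one_split (hcont.continuousAt.eventually_lt_const ?_)
    simpa using hε
  choose V hVo hV1 hVf using hV
  obtain ⟨s, hs, hdense⟩ := hG.exists_countable_dense_biUnion (fun x ↦ (hVo x).leftCoset x)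
    (eq_univ_of_forall fun x ↦ mem_iUnion.2 ⟨x, mem_smul_set.2 ⟨1, hV1 x, mul_one x⟩⟩)
  refine ⟨V '' s, hs.image V, image_subset_iff.2 fun x _ ↦ (hVo x).mem_nhds (hV1 x),
    hdense.mono (iUnion₂_subset fun x hx ↦ smul_set_subset_iff.2 fun v hv ↦ ?_)⟩
  refine ⟨V x, mem_image_of_mem V hx, fun w hw ↦ ?_⟩
  have hvw := hVf x v hv w hw
  have hv1 := hVf x v hv 1 (hV1 x)
  rw [mul_one] at hv1
  rw [smul_eq_mul, mul_assoc]
  exact (dist_triangle_right _ _ (f x)).trans_lt (by linarith)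

end WeaklyLindelof

section Cliquish

/-- `f` is cliquish with respect to topologies `τ` and `σ` if, for each `ε > 0`, the points near
which, in the sense of `σ`, `f` is within `ε` of its value are `τ`-dense. For `τ = σ` and
a Baire space this says that `f` is continuous at the points of a dense set. -/
def CliquishWrt {X Y : Type*} [PseudoMetricSpace Y] (τ σ : TopologicalSpace X) (f : X → Y) : Prop :=
  ∀ ε > 0, @Dense X τ {x | ∀ᶠ y in @nhds X σ x, dist (f y) (f x) < ε}

variable {G Y : Type*} [Group G] [PseudoMetricSpace Y] {f : G → Y}

theorem exists_coarser_firstCountableTopology_cliquishWrt [τ : TopologicalSpace G]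
    [ContinuousMul G] (hG : WeaklyLindelof G) (hnarrow : TotallyOmegaNarrow G)
    (hf : Continuous f) :
    ∃ σ : TopologicalSpace G, τ ≤ σ ∧ @ContinuousMul G σ _ ∧ @FirstCountableTopology G σ ∧
      CliquishWrt τ σ f := by
  choose C hC hCnhds hdense using
    fun n : ℕ ↦ hG.exists_countable_nhds_one_dense hf (Nat.one_div_pos_of_nat (α := ℝ) (n := n))
  obtain ⟨σ, hle, hmul, hfc, hCσ⟩ := hnarrow.exists_coarser_firstCountableTopology
    (countable_iUnion hC) (iUnion_subset hCnhds)
  refine ⟨σ, hle, hmul, hfc, fun ε hε ↦ ?_⟩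
  obtain ⟨n, hn⟩ := exists_nat_one_div_lt hε
  refine @Dense.mono G τ _ _ ?_ (hdense n)
  rintro x ⟨V, hV, hVf⟩
  rw [mem_ofPred_eq, ← @map_mul_left_nhds_one_of_separatelyContinuousMul G _ σ _, eventually_map]
  filter_upwards [hCσ (mem_iUnion_of_mem n hV)] with v hv using (hVf v hv).trans hn

theorem CliquishWrt.regularization {τ : TopologicalSpace G} [σ : TopologicalSpace G]
    [ContinuousMul G] (hle : τ ≤ σ) (hf : Continuous[τ, _] f) (h : CliquishWrt τ σ f) :
    CliquishWrt τ (regularization σ) f := by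
  intro ε hε
  refine @Dense.mono G τ _ _ (fun x hx ↦ ?_) (h (ε / 3) (by positivity))
  refine (eventually_regularization_mem_nhds isClosed_closure
    (mem_of_superset hx subset_closure)).mono fun y hy ↦ ?_
  have hball : f ⁻¹' Metric.ball (f y) (ε / 3) ∈ @nhds G τ y :=
    (@Continuous.tendsto _ _ τ _ f hf y).eventually_mem (Metric.ball_mem_nhds _ (by positivity))
  obtain ⟨e, ⟨hecl, hey⟩, hee⟩ := (@mem_closure_iff_nhds G τ _ _).1 (h (ε / 3) (by positivity) y) _
    (inter_mem (nhds_mono hle hy) hball)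
  obtain ⟨z, hze, hzx⟩ := mem_closure_iff_nhds.1 hecl _ hee
  calc dist (f y) (f x) ≤ dist (f y) (f e) + dist (f e) (f z) + dist (f z) (f x) :=
        dist_triangle4 _ _ _ _
    _ < ε / 3 + ε / 3 + ε / 3 := by
        gcongr
        · exact Metric.mem_ball'.1 hey
        · rw [dist_comm]; exact hze
        · exact hzx
    _ = ε := by ring

theorem exists_coarser_regularSpace_secondCountableTopology_cliquishWrt [τ : TopologicalSpace G]
    [ContinuousMul G] (hG : WeaklyLindelof G) (hnarrow : TotallyOmegaNarrow G)
    (hf : Continuous f) :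
    ∃ ρ : TopologicalSpace G, τ ≤ ρ ∧ @ContinuousMul G ρ _ ∧ @RegularSpace G ρ ∧
      @SecondCountableTopology G ρ ∧ CliquishWrt τ ρ f := by
  obtain ⟨σ, hle, _, _, hcliquish⟩ :=
    exists_coarser_firstCountableTopology_cliquishWrt hG hnarrow hf
  have hleρ : τ ≤ regularization σ := hle.trans le_regularization
  exact ⟨regularization σ, hleρ, continuousMul_regularization, regularSpace_regularization,
    @TotallyOmegaNarrow.secondCountableTopology G _ (regularization σ) continuousMul_regularization
      firstCountableTopology_regularization (hnarrow.mono hleρ),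
    hcliquish.regularization hle hf⟩

theorem isClosed_ofPred_dist_apply_mul_le [TopologicalSpace G] [SeparatelyContinuousMul G]
    (hf : Continuous f) (h : G) (ε : ℝ) : IsClosed {g | dist (f (g * h)) (f g) ≤ ε} :=
  isClosed_le (by fun_prop) continuous_const

theorem CliquishWrt.inseparable_apply {τ : TopologicalSpace G} [σ : TopologicalSpace G]
    [SeparatelyContinuousMul G] (hτ : @SeparatelyContinuousMul G τ _) (hf : Continuous[τ, _] f)
    (h : CliquishWrt τ σ f) {x y : G} (hxy : Inseparable x y) : Inseparable (f x) (f y) := by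
  refine .symm <| Metric.inseparable_iff.2 <|
    (le_of_forall_gt_imp_ge_of_dense fun ε hε ↦ ?_).antisymm dist_nonneg
  have hclosed := @isClosed_ofPred_dist_apply_mul_le _ _ _ _ f τ hτ hf (x⁻¹ * y) ε
  have hsub : {g | ∀ᶠ z in 𝓝 g, dist (f z) (f g) < ε} ⊆
      {g | dist (f (g * (x⁻¹ * y))) (f g) ≤ ε} := by
    intro g (hg : ∀ᶠ z in 𝓝 g, dist (f z) (f g) < ε)
    have hinsep : Inseparable g (g * (x⁻¹ * y)) := by
      simpa [mul_assoc] using hxy.map (continuous_const_mul (g * x⁻¹))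
    exact (hinsep.nhds_eq ▸ hg).self_of_nhds.le
  have hx : x ∈ {g | dist (f (g * (x⁻¹ * y))) (f g) ≤ ε} :=
    (@closure_minimal _ τ _ _ hsub hclosed) (h ε hε x)
  simpa using hx

end Cliquish

theorem exists_hom_separable_metrizable_inseparable_apply {G Y : Type*} [Group G]
    [τ : TopologicalSpace G] [ContinuousMul G] [PseudoMetricSpace Y] {f : G → Y}
    (hG : WeaklyLindelof G) (hnarrow : TotallyOmegaNarrow G) (hf : Continuous f) :
    ∃ (H : Type) (_ : Group H) (_ : TopologicalSpace H),
      ContinuousMul H ∧ SeparableSpace H ∧ MetrizableSpace H ∧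
        ∃ π : G →* H, Continuous π ∧ Surjective π ∧
          ∀ x y, π x = π y → Inseparable (f x) (f y) := by
  obtain ⟨ρ, hle, _, _, _, hcliquish⟩ :=
    exists_coarser_regularSpace_secondCountableTopology_cliquishWrt hG hnarrow hf
  obtain ⟨H, gH, tH, hH, hsep, hmetr, π, hπ, hsurj⟩ := exists_isInducing_hom_separable_metrizable G
  exact ⟨H, gH, tH, hH, hsep, hmetr, π, continuous_le_dom hle hπ.continuous, hsurj,
    fun x y hxy ↦ hcliquish.inseparable_apply inferInstance hf (hπ.inseparable_iff.1 (.of_eq hxy))⟩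

end

/-- Every totally ω-narrow weakly Lindelöf paratopological group is simply sm-factorizable. -/
theorem statement5 (G : Type*) [gG : Group G] [τ : TopologicalSpace G] [ContinuousMul G]
    (hWL : WeaklyLindelof G)
    (hTot : @OmegaNarrow G gG (τ ⊓ conjTop G τ)) :
    SimplySMFactorizablePara G := by
  rintro U ⟨f, hf, rfl⟩
  obtain ⟨H, gH, tH, hH, hsep, hmetr, π, hπ, hsurj, hfac⟩ :=
    exists_hom_separable_metrizable_inseparable_apply hWL hTot hf
  refine ⟨H, gH, tH, hH, hsep, hmetr, π, hπ, hsurj, (subset_preimage_image _ _).antisymm' ?_⟩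
  rintro y ⟨x, hx, hxy⟩
  rwa [mem_preimage, ← (hfac x y hxy).eq]
end

section
/- Let G be a regular simply sm-factorizable paratopological group with topology τ, and let G* be the associated topological group, i.e., G with the topology τ* = τ ∨ τ⁻¹. Then the index of narrowness of G* is at most 𝔠 = 2^ω: for every neighborhood U of the identity in G* there is a set A ⊆ G with |A| ≤ 𝔠 and A·U = U·A = G. Consequently, every pairwise disjoint family of nonempty open subsets of G has cardinality at most 2^𝔠. -/
open Topology TopologicalSpace Pointwise Function Set

/-!
A regular paratopological group is completely regular, so every neighbourhood of the identity
contains a cozero neighbourhood, and saturation of the latter puts the kernel of a homomorphism onto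
a separable metrizable group inside it. Such a group has at most `𝔠` elements, so the normal
subgroups of index at most `𝔠` become arbitrarily small at the identity. Being symmetric, they are
also arbitrarily small in `G*`, and coset representatives witness narrowness.

For cellularity, choose in each member `U` of a disjoint family a coset `x_U N_U` of such a
subgroup. If `x_V ≡ x_W` modulo `N_U` and `x_U ≡ x_V` modulo `N_W`, then `x_U x_V⁻¹ x_W` lies in
`U ∩ W`, so `U = W`. Colouring the pair `(U, V)` by the coset of `x_V` modulo `N_U` therefore turns
the bound into an Erdős–Rado type statement about colourings of pairs with `𝔠` colours.
-/

universe u v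

section Cardinality

open Cardinal

theorem mk_le_continuum_of_secondCountable (X : Type*) [TopologicalSpace X] [T0Space X]
    [SecondCountableTopology X] : #X ≤ 𝔠 := by
  obtain ⟨S, -, hS⟩ := exists_seq_separating X (p := IsOpen) isOpen_empty univ
  have hinj : Injective fun x : X => {n | x ∈ S n} := fun x y hxy =>
    hS x (mem_univ x) y (mem_univ y) (Set.ext_iff.1 hxy)
  simpa using lift_mk_le_lift_mk_of_injective hinj

theorem sum_le_of_mk_le {ι : Type u} {f : ι → Cardinal.{u}} {κ : Cardinal.{u}} (hκ : ℵ₀ ≤ κ)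
    (hι : #ι ≤ κ) (hf : ∀ i, f i ≤ κ) : sum f ≤ κ :=
  calc
    sum f ≤ sum fun _ : ι => κ := sum_le_sum _ _ hf
    _ = #ι * κ := sum_const' ι κ
    _ ≤ κ := mul_le_of_le hκ hι le_rfl

/-- Terms built from nothing by the operations that take a family `(iᵣ)` indexed by a set `D` of
colours to some element whose colours from the `iᵣ` are a prescribed function `D → R`; a node
carries the pair of `D` and that function, and its subtrees stand for the `iᵣ`. -/
abbrev ColourTree (R : Type v) : Type v :=
  WType fun p : Σ D : Set R, (D → R) => p.1

theorem mk_colourTree_le (R : Type v) [Infinite R] : #(ColourTree R) ≤ 2 ^ #R := by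
  have hR : ℵ₀ ≤ #R := aleph0_le_mk R
  have hR₂ : ℵ₀ ≤ 2 ^ #R := hR.trans (cantor _).le
  have hlabel : #(Σ D : Set R, (D → R)) ≤ 2 ^ #R := by
    rw [mk_sigma]
    refine sum_le_of_mk_le hR₂ mk_set.le fun D => ?_
    calc
      #(D → R) = #R ^ #D := (power_def R D).symm
      _ ≤ #R ^ #R := power_le_power_left (mk_ne_zero R) (mk_set_le D)
      _ = 2 ^ #R := power_self_eq hR
  refine WType.cardinalMk_le_of_le (sum_le_of_mk_le hR₂ hlabel fun p => ?_)
  calc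
    (2 ^ #R) ^ #p.1 ≤ (2 ^ #R) ^ #R :=
      power_le_power_left (power_ne_zero _ two_ne_zero) (mk_set_le p.1)
    _ = 2 ^ #R := by rw [← power_mul, mul_eq_self hR]

/-- The element denoted by a tree, where `c i j` is the colour of `j` from `i`. At a node whose
prescription cannot be met the value is arbitrary. -/
noncomputable def ColourTree.eval {I : Type u} {R : Type v} [Nonempty I] (c : I → I → R) :
    ColourTree R → I :=
  WType.elim I fun ⟨⟨_, t⟩, i⟩ => Classical.epsilon fun j => ∀ r, c (i r) j = t r

-- Instead of building an end-homogeneous sequence for `k`, choose trees whose values realise every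
-- colour that `k` gives to a tree value; the tree which mimics `k` against these has value `j`,
-- and among the chosen trees is one whose value `i` has the same colour from `k` as `j`.
theorem ColourTree.eval_surjective {I : Type u} {R : Type v} [Nonempty I] {c : I → I → R}
    (hc : ∀ i j k, c i j = c i k → c k i = c k j → i = k) : Surjective (eval c) := by
  intro k
  let D : Set R := range fun T => c k (eval c T)
  choose S hS using fun r : D => r.2
  let T : ColourTree R := ⟨⟨D, fun r => c (eval c (S r)) k⟩, S⟩
  have hT : ∀ r, c (eval c (S r)) (eval c T) = c (eval c (S r)) k :=
    Classical.epsilon_spec (p := fun j => ∀ r, c (eval c (S r)) j = c (eval c (S r)) k)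
      ⟨k, fun _ => rfl⟩
  let r : D := ⟨c k (eval c T), T, rfl⟩
  exact ⟨S r, hc _ _ _ (hT r) (hS r)⟩

theorem lift_mk_le_two_power_of_colouring {I : Type u} {R : Type v} [Infinite R] {c : I → I → R}
    (hc : ∀ i j k, c i j = c i k → c k i = c k j → i = k) :
    lift.{v} #I ≤ lift.{u} (2 ^ #R) := by
  cases isEmpty_or_nonempty I
  · simp
  · exact (lift_mk_le_lift_mk_of_surjective (ColourTree.eval_surjective hc)).trans
      (lift_le.2 (mk_colourTree_le R))

end Cardinality

section CompleteRegularity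

variable {G : Type*} [Group G] [TopologicalSpace G]

/-- The separation relation fed into Urysohn's construction in place of the relation
`closure A ⊆ B` used for normal spaces: `B` contains even the closure of a uniform right
enlargement of `A`. -/
def MulWellInside (A B : Set G) : Prop :=
  ∃ W : Set G, IsOpen W ∧ 1 ∈ W ∧ closure (A * W) ⊆ B

theorem MulWellInside.closure_subset {A B : Set G} : MulWellInside A B → closure A ⊆ B := by
  rintro ⟨W, -, h1, hWB⟩
  exact (closure_mono (subset_mul_left A h1)).trans hWB

variable [ContinuousMul G]

theorem closure_mul_subset_closure_mul (A W : Set G) : closure A * W ⊆ closure (A * W) :=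
  (mul_subset_mul_left subset_closure).trans (smul_set_closure_subset A W)

theorem closure_mul_mul_subset {A V W : Set G} (hVW : V * V ⊆ W) :
    closure (A * V) * V ⊆ closure (A * W) :=
  calc
    closure (A * V) * V ⊆ closure (A * V * V) := closure_mul_subset_closure_mul _ _
    _ = closure (A * (V * V)) := by rw [mul_assoc]
    _ ⊆ closure (A * W) := closure_mono (mul_subset_mul_left hVW)

theorem closure_mul_subset_interior_closure_mul {A V W : Set G} (hV : IsOpen V) (h1 : 1 ∈ V)
    (hVW : V * V ⊆ W) : closure (A * V) ⊆ interior (closure (A * W)) :=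
  (subset_mul_left _ h1).trans (interior_maximal (closure_mul_mul_subset hVW) hV.mul_left)

theorem MulWellInside.exists_between {A B : Set G} (h : MulWellInside A B) :
    ∃ C, IsOpen C ∧ MulWellInside A C ∧ MulWellInside (closure C) B := by
  obtain ⟨W, hW, h1W, hWB⟩ := h
  obtain ⟨V, hV, h1V, hVW⟩ := exists_open_nhds_one_mul_subset (hW.mem_nhds h1W)
  obtain ⟨V', hV', h1V', hV'V⟩ := exists_open_nhds_one_mul_subset (hV.mem_nhds h1V)
  have hint : closure (interior (closure (A * V))) ⊆ closure (A * V) :=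
    closure_minimal interior_subset isClosed_closure
  have hVB : closure (interior (closure (A * V))) * V ⊆ closure (A * W) :=
    (mul_subset_mul_right hint).trans (closure_mul_mul_subset hVW)
  exact ⟨interior (closure (A * V)), isOpen_interior,
    ⟨V', hV', h1V', closure_mul_subset_interior_closure_mul hV' h1V' hV'V⟩,
    ⟨V, hV, h1V, (closure_minimal hVB isClosed_closure).trans hWB⟩⟩

theorem mulWellInside_closure_singleton [RegularSpace G] {x : G} {O : Set G} (hO : O ∈ 𝓝 x) :
    MulWellInside (closure {x}) O := by
  obtain ⟨F, hF, hFc, hFO⟩ := exists_mem_nhds_isClosed_subset hO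
  refine ⟨(x * ·) ⁻¹' interior F, isOpen_interior.preimage (by fun_prop), ?_,
    (closure_minimal ?_ hFc).trans hFO⟩
  · simpa using mem_interior_iff_mem_nhds.2 hF
  · refine (closure_mul_subset_closure_mul _ _).trans (closure_minimal ?_ hFc)
    rw [singleton_mul, image_subset_iff]
    exact preimage_mono (f := (x * ·)) interior_subset

/-- The pair `closure {x} ⊆ O` as a starting point of Urysohn's construction for
`MulWellInside`. -/
def urysohnCU [RegularSpace G] {x : G} {O : Set G} (hO : IsOpen O) (hx : x ∈ O) :
    Urysohns.CU (MulWellInside (G := G)) where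
  C := closure {x}
  U := O
  P_C_U := mulWellInside_closure_singleton (hO.mem_nhds hx)
  closed_C := isClosed_closure
  open_U := hO
  subset := by
    simpa using (mulWellInside_closure_singleton (hO.mem_nhds hx)).closure_subset
  hP := fun {_ _} _ h _ _ => by
    obtain ⟨v, hv, hcv, hvu⟩ := h.exists_between
    exact ⟨v, hv, subset_closure.trans hcv.closure_subset,
      subset_closure.trans hvu.closure_subset, hcv, hvu⟩

/-- Banakh and Ravsky's theorem. -/
instance completelyRegularSpace_of_regularSpace [RegularSpace G] : CompletelyRegularSpace G :=
  completelyRegularSpace_iff_isOpen.2 fun x _ hO hx =>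
    let c := urysohnCU hO hx
    ⟨fun y => ⟨c.lim y, c.lim_mem_Icc y⟩, c.continuous_lim.subtype_mk _,
      Subtype.ext (c.lim_of_mem_C x (subset_closure rfl)),
      fun y hy => Subtype.ext (c.lim_of_notMem_U y hy)⟩

end CompleteRegularity

theorem exists_isCozero_subset_of_mem_nhds {X : Type*} [TopologicalSpace X]
    [CompletelyRegularSpace X] {x : X} {O : Set X} (hO : O ∈ 𝓝 x) :
    ∃ V, IsCozero V ∧ x ∈ V ∧ V ⊆ O := by
  obtain ⟨f, hf, hfx, hfO⟩ := CompletelyRegularSpace.completely_regular_isOpen x (interior O)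
    isOpen_interior (mem_interior_iff_mem_nhds.2 hO)
  refine ⟨_, ⟨fun y => 1 - (f y : ℝ), by fun_prop, rfl⟩, by simp [hfx], fun y hy => ?_⟩
  by_contra hyO
  exact hy (by simp [hfO fun h => hyO (interior_subset h)])

section Narrowness

open Cardinal hiding univ

variable {G : Type u} [Group G]

theorem exists_mul_eq_univ_of_normal (N : Subgroup G) [N.Normal] :
    ∃ A : Set G, #A = #(G ⧸ N) ∧ A * (N : Set G) = univ ∧ (N : Set G) * A = univ := by
  obtain ⟨A, hA, -⟩ := N.exists_isComplement_left 1
  exact ⟨A, mk_congr hA.leftQuotientEquiv.symm, hA.mul_eq,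
    Subgroup.set_mul_normal_comm A N ▸ hA.mul_eq⟩

variable [τ : TopologicalSpace G] {κ : Cardinal.{u}}

theorem exists_inter_inv_subset_of_mem_nhds_inf_conjTop {U : Set G}
    (hU : U ∈ @nhds G (τ ⊓ conjTop G τ) 1) :
    ∃ V ∈ 𝓝 (1 : G), V ∩ V⁻¹ ⊆ U := by
  rw [nhds_inf, conjTop, nhds_induced, inv_one, Filter.mem_inf_iff_superset] at hU
  obtain ⟨V, hV, V', ⟨W, hW, hWV'⟩, hVV'⟩ := hU
  exact ⟨V ∩ W, Filter.inter_mem hV hW,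
    (inter_subset_inter inter_subset_left ((inv_subset_inv.2 inter_subset_right).trans hWV')).trans
      hVV'⟩

/-- Every neighbourhood of the identity contains a normal subgroup of index at most `κ`: the
property of a paratopological group behind both the narrowness of the associated topological group
and the bound on cellularity. -/
def HasNormalSubgroupsOfIndexLE (κ : Cardinal.{u}) (G : Type u) [Group G] [TopologicalSpace G] :
    Prop :=
  ∀ U ∈ 𝓝 (1 : G), ∃ N : Subgroup G, N.Normal ∧ (N : Set G) ⊆ U ∧ #(G ⧸ N) ≤ κ

theorem HasNormalSubgroupsOfIndexLE.exists_mul_eq_univ (h : HasNormalSubgroupsOfIndexLE κ G)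
    {U : Set G} (hU : U ∈ @nhds G (τ ⊓ conjTop G τ) 1) :
    ∃ A : Set G, #A ≤ κ ∧ A * U = univ ∧ U * A = univ := by
  obtain ⟨V, hV, hVU⟩ := exists_inter_inv_subset_of_mem_nhds_inf_conjTop hU
  obtain ⟨N, hN, hNV, hNκ⟩ := h V hV
  have hNU : (N : Set G) ⊆ U :=
    (subset_inter hNV fun _ hx => mem_inv.2 (hNV (N.inv_mem hx))).trans hVU
  obtain ⟨A, hA, hAN, hNA⟩ := exists_mul_eq_univ_of_normal N
  exact ⟨A, hA.trans_le hNκ, univ_subset_iff.1 (hAN ▸ mul_subset_mul_left hNU),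
    univ_subset_iff.1 (hNA ▸ mul_subset_mul_right hNU)⟩

theorem HasNormalSubgroupsOfIndexLE.exists_coset_subset [ContinuousConstSMul G G]
    (h : HasNormalSubgroupsOfIndexLE κ G) {U : Set G} (hU : IsOpen U) {x : G} (hx : x ∈ U) :
    ∃ N : Subgroup G, N.Normal ∧ #(G ⧸ N) ≤ κ ∧ ∀ y : G, (y : G ⧸ N) = x → y ∈ U := by
  have hU1 : (x • ·) ⁻¹' U ∈ 𝓝 (1 : G) :=
    (hU.preimage (continuous_const_smul x)).mem_nhds (by simpa using hx)
  obtain ⟨N, hN, hNU, hNκ⟩ := h _ hU1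
  refine ⟨N, hN, hNκ, fun y hy => ?_⟩
  simpa using hNU (QuotientGroup.eq.1 hy.symm)

theorem HasNormalSubgroupsOfIndexLE.mk_le_two_power [ContinuousConstSMul G G]
    (h : HasNormalSubgroupsOfIndexLE κ G) (hκ : ℵ₀ ≤ κ) {𝒰 : Set (Set G)}
    (h𝒰 : ∀ U ∈ 𝒰, IsOpen U ∧ U.Nonempty) (hdisj : 𝒰.PairwiseDisjoint id) : #𝒰 ≤ 2 ^ κ := by
  choose x hx using fun U : 𝒰 => (h𝒰 U U.2).2
  choose N hN hNκ hNU using fun U : 𝒰 => h.exists_coset_subset (h𝒰 U U.2).1 (hx U)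
  have hcolour : ∀ U, Nonempty (G ⧸ N U ↪ κ.out) := fun U => by
    rw [← Cardinal.le_def, mk_out]
    exact hNκ U
  let φ := fun U => (hcolour U).some
  have : Infinite κ.out := by rwa [infinite_iff, mk_out]
  have hsep : ∀ U V W : 𝒰, φ U (x V) = φ U (x W) → φ W (x U) = φ W (x V) → U = W := by
    intro U V W hVW hUV
    replace hVW : (x V : G ⧸ N U) = x W := (φ U).injective hVW
    replace hUV : (x U : G ⧸ N W) = x V := (φ W).injective hUV
    by_contra hne
    have hU : x U * (x V)⁻¹ * x W ∈ (U : Set G) := hNU U _ (by simp [hVW])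
    have hW : x U * (x V)⁻¹ * x W ∈ (W : Set G) := hNU W _ (by simp [hUV])
    exact (hdisj U.2 W.2 (Subtype.coe_ne_coe.2 hne)).le_bot ⟨hU, hW⟩
  simpa using lift_mk_le_two_power_of_colouring hsep

end Narrowness

section Factorization

open Cardinal hiding univ

variable {G : Type u} [Group G] [τ : TopologicalSpace G] {κ : Cardinal.{u}}

/-- Every cozero set is saturated with respect to a normal subgroup of index at most `κ`: all that
simple sm-factorizability says, for `κ = 𝔠`, when the topology of the quotients is forgotten. -/
def SimplyFactorizable (κ : Cardinal.{u}) (G : Type u) [Group G] [TopologicalSpace G] : Prop :=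
  ∀ U : Set G, IsCozero U → ∃ N : Subgroup G, N.Normal ∧ #(G ⧸ N) ≤ κ ∧ U * N = U

theorem SimplySMFactorizablePara.simplyFactorizable (h : SimplySMFactorizablePara G) :
    SimplyFactorizable 𝔠 G := by
  intro U hU
  obtain ⟨H, _, _, -, _, _, π, -, hπ, hπU⟩ := h U hU
  let _ := metrizableSpaceMetric H
  have _ := UniformSpace.secondCountable_of_separable H
  have hindex : lift.{0} #(G ⧸ π.ker) = lift.{u} #H :=
    lift_mk_eq'.2 ⟨(QuotientGroup.quotientKerEquivOfSurjective π hπ).toEquiv⟩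
  have hH : #H ≤ 𝔠 := mk_le_continuum_of_secondCountable H
  refine ⟨π.ker, inferInstance, ?_, ?_⟩
  · rwa [← lift_le_continuum.{u, 0}, hindex, lift_le_continuum]
  · refine (mul_subset_iff.2 fun x hx n hn => ?_).antisymm (subset_mul_left U π.ker.one_mem)
    rw [← hπU]
    exact ⟨x, hx, by simp [MonoidHom.mem_ker.1 hn]⟩

theorem SimplyFactorizable.hasNormalSubgroupsOfIndexLE [CompletelyRegularSpace G]
    (h : SimplyFactorizable κ G) : HasNormalSubgroupsOfIndexLE κ G := by
  intro O hO
  obtain ⟨V, hV, h1V, hVO⟩ := exists_isCozero_subset_of_mem_nhds hO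
  obtain ⟨N, hN, hNκ, hVN⟩ := h V hV
  exact ⟨N, hN, ((subset_mul_right _ h1V).trans hVN.subset).trans hVO, hNκ⟩

theorem statement18_general [ContinuousConstSMul G G] [CompletelyRegularSpace G]
    (hκ : ℵ₀ ≤ κ) (hG : SimplyFactorizable κ G) :
    (∀ U ∈ @nhds G (τ ⊓ conjTop G τ) (1 : G),
      ∃ A : Set G, #A ≤ κ ∧ A * U = univ ∧ U * A = univ) ∧
    ∀ 𝒰 : Set (Set G), (∀ U ∈ 𝒰, IsOpen U ∧ U.Nonempty) → 𝒰.PairwiseDisjoint id →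
      #𝒰 ≤ 2 ^ κ :=
  have hN := hG.hasNormalSubgroupsOfIndexLE
  ⟨fun _ => hN.exists_mul_eq_univ, fun _ => hN.mk_le_two_power hκ⟩

end Factorization

/-- The topological group associated to a regular simply sm-factorizable paratopological group
has index of narrowness at most 𝔠; consequently the cellularity of the group is at most 2^𝔠. -/
theorem statement18 (G : Type*) [gG : Group G] [τ : TopologicalSpace G] [ContinuousMul G]
    [T1Space G] [RegularSpace G] (hG : SimplySMFactorizablePara G) :
    (∀ U ∈ @nhds G (τ ⊓ conjTop G τ) (1 : G),
      ∃ A : Set G, Cardinal.mk A ≤ Cardinal.continuum ∧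
        A * U = Set.univ ∧ U * A = Set.univ) ∧
    ∀ 𝒰 : Set (Set G), (∀ U ∈ 𝒰, IsOpen U ∧ U.Nonempty) → 𝒰.PairwiseDisjoint id →
      Cardinal.mk 𝒰 ≤ 2 ^ Cardinal.continuum :=
  statement18_general Cardinal.aleph0_le_continuum hG.simplyFactorizable
end
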